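/- With notation as above, for any q ∈ {1,…,M}, the Shapovalov form S = S^{(M)} = Σ_{1≤i₁<…<i_M≤r} Π_{s=1}^M a_{i_s} dlog f_{i_s}^{(1)} ∧ dlog f_{i_s}^{(2)} satisfies S = (η^{(1)} − η^{(2)}) ∧ S^{(M−1)} ∧ dlog(F_q^{(1)} − F_q^{(2)}). In particular, S is exact in the Aomoto complex (with differential ω ↦ (η^{(1)}−η^{(2)})∧ω) on the open set where F_q^{(1)} − F_q^{(2)} is invertible. -/

import Mathlib

set_option synthInstance.maxHeartbeats 1000000
set_option maxHeartbeats 1000000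

noncomputable section

open ExteriorAlgebra

/-- Points of `W × W`, where `W = ℂ^M`. -/
abbrev Pt (M : ℕ) := (Fin M → ℂ) × (Fin M → ℂ)

/-- The dual space of `W × W`; constant-coefficient 1-forms live here. -/
abbrev Cov (M : ℕ) := Pt M →ₗ[ℂ] ℂ

/-- Algebraic differential forms on (an open subset of) `W × W`, described by their
value at each point as an element of the exterior algebra of the dual space. -/
abbrev Forms (M : ℕ) := ExteriorAlgebra ℂ (Cov M)

variable (M r : ℕ)

/-- `dlog f_i^{(1)}` at the point `p`, where `f_i` is the degree one polynomial with
linear part `ℓ i` and constant term `c i`, pulled back via the first projection. -/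
def dlog1 (ℓ : Fin r → ((Fin M → ℂ) →ₗ[ℂ] ℂ)) (c : Fin r → ℂ) (i : Fin r)
    (p : Pt M) : Forms M :=
  (ℓ i p.1 + c i)⁻¹ • ι ℂ ((ℓ i).comp (LinearMap.fst ℂ (Fin M → ℂ) (Fin M → ℂ)))

/-- `dlog f_i^{(2)}` at the point `p` (pullback via the second projection). -/
def dlog2 (ℓ : Fin r → ((Fin M → ℂ) →ₗ[ℂ] ℂ)) (c : Fin r → ℂ) (i : Fin r)
    (p : Pt M) : Forms M :=
  (ℓ i p.2 + c i)⁻¹ • ι ℂ ((ℓ i).comp (LinearMap.snd ℂ (Fin M → ℂ) (Fin M → ℂ)))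

/-- `dlog (F_q^{(1)} − F_q^{(2)})` at the point `p`, for linear forms `F q` on `W`. -/
def dlogH (F : Fin M → ((Fin M → ℂ) →ₗ[ℂ] ℂ)) (q : Fin M) (p : Pt M) : Forms M :=
  (F q p.1 - F q p.2)⁻¹ •
    ι ℂ ((F q).comp (LinearMap.fst ℂ (Fin M → ℂ) (Fin M → ℂ))
          - (F q).comp (LinearMap.snd ℂ (Fin M → ℂ) (Fin M → ℂ)))

/-- `S^{(b)} = Σ_{i₁<…<i_b} Π_s a_{i_s} dlog f_{i_s}^{(1)} ∧ dlog f_{i_s}^{(2)}`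
at the point `p`. -/
def Sb (ℓ : Fin r → ((Fin M → ℂ) →ₗ[ℂ] ℂ)) (c : Fin r → ℂ) (a : Fin r → ℂ)
    (b : ℕ) (p : Pt M) : Forms M :=
  ∑ s ∈ Finset.powersetCard b (Finset.univ : Finset (Fin r)),
    (∏ i ∈ s, a i) •
      ((s.sort (· ≤ ·)).map (fun i => dlog1 M r ℓ c i p * dlog2 M r ℓ c i p)).prod

/-- `η^{(1)} = Σ_i a_i dlog f_i^{(1)}` at the point `p`. -/
def eta1 (ℓ : Fin r → ((Fin M → ℂ) →ₗ[ℂ] ℂ)) (c : Fin r → ℂ) (a : Fin r → ℂ)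
    (p : Pt M) : Forms M :=
  ∑ i : Fin r, a i • dlog1 M r ℓ c i p

/-- `η^{(2)} = Σ_i a_i dlog f_i^{(2)}` at the point `p`. -/
def eta2 (ℓ : Fin r → ((Fin M → ℂ) →ₗ[ℂ] ℂ)) (c : Fin r → ℂ) (a : Fin r → ℂ)
    (p : Pt M) : Forms M :=
  ∑ i : Fin r, a i • dlog2 M r ℓ c i p

/-!
Let `X` be the vector field on `W × W` whose value at `p` is `p` itself, and let `x_i`, `y_i` be the
pullbacks of the linear part of `f_i` along the difference map and along the second projection,
`y_i` rescaled so that `a_i dlog f_i^{(1)} ∧ dlog f_i^{(2)} = x_i ∧ y_i`. Only `M` linearly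
independent forms come from the difference map, so `S^{(b)}` is annihilated by every product of more
than `M - b` of them. In particular `dH ∧ S^{(M)} = 0` for `H = F_q^{(1)} - F_q^{(2)}`; contracting
with `X` gives `H S^{(M)} = dH ∧ i_X S^{(M)}`, and the elementary symmetric shape of `S^{(b)}` gives
`i_X S^{(M)} = (∑ X(x_i) y_i - X(y_i) x_i) ∧ S^{(M-1)}`. Up to forms coming from the difference map,
which `S^{(M-1)} ∧ dH` annihilates, the left factor is `η^{(2)} - η^{(1)}`.
-/

section ElementarySymmetric

variable {C : Type*} [CommSemiring C]

lemma esymm_cons_succ (a : C) (s : Multiset C) (n : ℕ) :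
    (a ::ₘ s).esymm (n + 1) = s.esymm (n + 1) + a * s.esymm n := by
  simp only [Multiset.esymm, Multiset.powersetCard_cons, Multiset.map_add, Multiset.sum_add,
    Multiset.map_map, Function.comp_def, Multiset.prod_cons, Multiset.sum_map_mul_left]

lemma esymm_zero_right (s : Multiset C) : s.esymm 0 = 1 := by
  simp [Multiset.esymm]

lemma esymm_zero_left_succ (n : ℕ) : (0 : Multiset C).esymm (n + 1) = 0 := by
  simp [Multiset.esymm, Multiset.powersetCard_zero_right]

variable {σ N : Type*} [AddCommMonoid N] [Module C N]

-- Because `z i • ψ i = 0`, the derivative may be summed over all indices, not only over those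
-- missing from the remaining monomial; hence the product form of the right-hand side.
lemma map_esymm_succ_of_leibniz (D : C →+ N) (z : σ → C) (ψ : σ → N) (hone : D 1 = 0)
    (hmul : ∀ i w, D (z i * w) = w • ψ i + z i • D w) (hz : ∀ i, z i • ψ i = 0)
    (s : Multiset σ) (n : ℕ) :
    D ((s.map z).esymm (n + 1)) = (s.map z).esymm n • (s.map ψ).sum := by
  induction s using Multiset.induction_on generalizing n with
  | empty => simp [esymm_zero_left_succ]
  | cons i s ih =>
    rw [Multiset.map_cons, Multiset.map_cons, Multiset.sum_cons, esymm_cons_succ, map_add, ih, hmul]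
    cases n with
    | zero => simp only [esymm_zero_right, hone, smul_zero, one_smul, add_zero, add_comm]
    | succ n =>
      have hcross : (z i * (s.map z).esymm n) • ψ i = 0 := by
        rw [mul_comm, mul_smul, hz, smul_zero]
      rw [ih, esymm_cons_succ, smul_add, add_smul, add_smul, hcross, mul_smul]
      abel

end ElementarySymmetric

section ListProd

variable {α R A : Type*}

lemma prod_map_sort [LinearOrder α] [CommMonoid A] (s : Finset α) (f : α → A) :
    ((s.sort (· ≤ ·)).map f).prod = ∏ i ∈ s, f i := by
  rw [← List.prod_toFinset f (s.sort_nodup _), Finset.sort_toFinset]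

lemma prod_map_smul_prod_map [Monoid R] [Monoid A] [MulAction R A] [IsScalarTower R A A]
    [SMulCommClass R A A] (l : List α) (a : α → R) (f : α → A) :
    (l.map a).prod • (l.map f).prod = (l.map fun i => a i • f i).prod := by
  induction l with
  | nil => simp
  | cons i l ih => simp only [List.map_cons, List.prod_cons, ← ih, smul_mul_smul_comm]

end ListProd

section Bivector

variable {R E : Type*} [CommRing R] [AddCommGroup E] [Module R E]

lemma ι_mul_ι_eq_neg (x y : E) : ι R x * ι R y = -(ι R y * ι R x) :=
  eq_neg_of_add_eq_zero_left (ι_add_mul_swap x y)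

lemma ι_mul_ι_mem_center (x y : E) :
    ι R x * ι R y ∈ Subalgebra.center R (ExteriorAlgebra R E) := by
  rw [Subalgebra.mem_center_iff]
  intro b
  induction b using ExteriorAlgebra.induction with
  | algebraMap t => exact Algebra.commutes t _
  | ι z =>
    rw [← mul_assoc, ι_mul_ι_eq_neg z x, neg_mul, mul_assoc, ι_mul_ι_eq_neg z y, mul_neg, neg_neg,
      mul_assoc]
  | mul s t hs ht => rw [mul_assoc, ht, ← mul_assoc, hs, mul_assoc]
  | add s t hs ht => rw [add_mul, mul_add, hs, ht]

lemma center_mul_comm (w : Subalgebra.center R (ExteriorAlgebra R E)) (b : ExteriorAlgebra R E) :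
    (w : ExteriorAlgebra R E) * b = b * w :=
  (Subalgebra.mem_center_iff.1 w.2 b).symm

open CliffordAlgebra in
lemma contractLeft_ι_mul_ι_mul (X : Module.Dual R E) (x y : E) (w : ExteriorAlgebra R E) :
    contractLeft X (ι R x * ι R y * w)
      = ι R (X x • y - X y • x) * w + ι R x * ι R y * contractLeft X w := by
  rw [mul_assoc, contractLeft_ι_mul, contractLeft_ι_mul, map_sub, map_smul, map_smul]
  simp only [sub_mul, mul_sub, smul_mul_assoc, mul_smul_comm, mul_assoc]
  abel

lemma ι_smul_sub_smul_mul_ι_mul_ι (a b : R) (x y : E) :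
    ι R (a • y - b • x) * (ι R x * ι R y) = 0 := by
  have hy : ι R y * (ι R x * ι R y) = 0 := by
    rw [← mul_assoc, ι_mul_ι_eq_neg y, neg_mul, mul_assoc, ι_sq_zero, mul_zero, neg_zero]
  have hx : ι R x * (ι R x * ι R y) = 0 := by
    rw [← mul_assoc, ι_sq_zero, zero_mul]
  rw [map_sub, map_smul, map_smul, sub_mul, smul_mul_assoc, smul_mul_assoc, hx, hy, smul_zero,
    smul_zero, sub_zero]

variable (R) in
/-- The decomposable two-form `x ∧ y`, as an element of the center of the exterior algebra; the
center being a commutative ring, elementary symmetric functions of two-forms make sense there. -/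
def bivector (x y : E) : Subalgebra.center R (ExteriorAlgebra R E) :=
  ⟨ι R x * ι R y, ι_mul_ι_mem_center x y⟩

variable {σ : Type*}

variable (R) in
/-- The `n`-th elementary symmetric function of the two-forms `x i ∧ y i`, `i ∈ s`: the shape of the
forms `S^{(n)}` once the weights and denominators are absorbed into the `y i`. -/
def bivectorEsymm (x y : σ → E) (s : Finset σ) (n : ℕ) :
    Subalgebra.center R (ExteriorAlgebra R E) :=
  (s.val.map fun i => bivector R (x i) (y i)).esymm n

lemma coe_bivectorEsymm_cons_succ (x y : σ → E) (s : Finset σ) {i : σ} (hi : i ∉ s) (n : ℕ) :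
    (bivectorEsymm R x y (s.cons i hi) (n + 1) : ExteriorAlgebra R E)
      = bivectorEsymm R x y s (n + 1) + ι R (x i) * (bivectorEsymm R x y s n * ι R (y i)) := by
  rw [center_mul_comm, ← mul_assoc, bivectorEsymm, Finset.cons_val, Multiset.map_cons,
    esymm_cons_succ]
  rfl

lemma contractLeft_bivectorEsymm_succ (X : Module.Dual R E) (x y : σ → E) (s : Finset σ) (n : ℕ) :
    CliffordAlgebra.contractLeft X (bivectorEsymm R x y s (n + 1) : ExteriorAlgebra R E)
      = ι R (∑ i ∈ s, (X (x i) • y i - X (y i) • x i)) * bivectorEsymm R x y s n := by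
  let D : Subalgebra.center R (ExteriorAlgebra R E) →+ ExteriorAlgebra R E :=
    (CliffordAlgebra.contractLeft X ∘ₗ
      (Subalgebra.center R (ExteriorAlgebra R E)).val.toLinearMap).toAddMonoidHom
  rw [map_sum, ← center_mul_comm]
  refine map_esymm_succ_of_leibniz D (fun i => bivector R (x i) (y i))
    (fun i => ι R (X (x i) • y i - X (y i) • x i))
    (CliffordAlgebra.contractLeft_one (Q := 0) (d := X)) (fun i w => ?_) (fun i => ?_) s.val n
  · rw [Subalgebra.smul_def, smul_eq_mul, center_mul_comm]
    exact contractLeft_ι_mul_ι_mul X (x i) (y i) w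
  · rw [Subalgebra.smul_def, smul_eq_mul, center_mul_comm]
    exact ι_smul_sub_smul_mul_ι_mul_ι _ _ (x i) (y i)

variable {V : Type*} [AddCommGroup V] [Module R V] [Module.Free R V] [Module.Finite R V]
variable [Nontrivial R]

lemma range_ι_pow_eq_bot {k : ℕ} (hk : Module.finrank R V < k) :
    LinearMap.range (ι R : V →ₗ[R] ExteriorAlgebra R V) ^ k = ⊥ := by
  have hrank : Module.finrank R (⋀[R]^k V) = 0 := by
    rw [exteriorPower.finrank_eq, Nat.choose_eq_zero_of_lt hk]
  exact Submodule.subsingleton_iff_eq_bot.1 ((Module.finrank_eq_zero_iff_of_free R _).1 hrank)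

lemma eq_zero_of_mem_range_ι_comp_pow (δ : V →ₗ[R] E) {k : ℕ} (hk : Module.finrank R V < k)
    {w : ExteriorAlgebra R E} (hw : w ∈ LinearMap.range (ι R ∘ₗ δ) ^ k) : w = 0 := by
  rwa [← map_comp_ι, LinearMap.range_comp, ← Submodule.map_pow, range_ι_pow_eq_bot hk,
    Submodule.map_bot, Submodule.mem_bot] at hw

lemma mul_bivectorEsymm_eq_zero (δ : V →ₗ[R] E) (v : σ → V) (y : σ → E) (s : Finset σ) {k n : ℕ}
    (hkn : Module.finrank R V < k + n) {w : ExteriorAlgebra R E}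
    (hw : w ∈ LinearMap.range (ι R ∘ₗ δ) ^ k) :
    w * bivectorEsymm R (fun i => δ (v i)) y s n = 0 := by
  induction s using Finset.cons_induction generalizing k n w with
  | empty =>
    cases n with
    | zero => rw [eq_zero_of_mem_range_ι_comp_pow δ hkn hw, zero_mul]
    | succ n =>
      rw [bivectorEsymm, Finset.empty_val, Multiset.map_zero, esymm_zero_left_succ,
        ZeroMemClass.coe_zero, mul_zero]
  | cons i s hi ih =>
    cases n with
    | zero => rw [eq_zero_of_mem_range_ι_comp_pow δ hkn hw, zero_mul]
    | succ n =>
      have hwi : w * ι R (δ (v i)) ∈ LinearMap.range (ι R ∘ₗ δ) ^ (k + 1) :=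
        pow_succ (LinearMap.range (ι R ∘ₗ δ)) k ▸ Submodule.mul_mem_mul hw ⟨v i, rfl⟩
      rw [coe_bivectorEsymm_cons_succ, mul_add, ih hkn hw, ← mul_assoc, ← mul_assoc,
        ih (by omega) hwi, zero_mul, add_zero]

theorem smul_bivectorEsymm_succ (δ : V →ₗ[R] E) (X : Module.Dual R E) (v : σ → V) (y : σ → E)
    (s : Finset σ) {n : ℕ} (hn : Module.finrank R V ≤ n + 1) (u h : V) :
    X (δ h) • (bivectorEsymm R (fun i => δ (v i)) y s (n + 1) : ExteriorAlgebra R E)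
      = ι R (δ u - ∑ i ∈ s, X (δ (v i)) • y i)
          * (bivectorEsymm R (fun i => δ (v i)) y s n * ι R (δ h)) := by
  set S := bivectorEsymm R (fun i => δ (v i)) y s (n + 1)
  set T := bivectorEsymm R (fun i => δ (v i)) y s n
  have hmem (u : V) : ι R (δ u) ∈ LinearMap.range (ι R ∘ₗ δ) := ⟨u, rfl⟩
  have hS : ι R (δ h) * S = 0 :=
    mul_bivectorEsymm_eq_zero δ v y s (k := 1) (by omega) (by rw [pow_one]; exact hmem h)
  have hT (u : V) : ι R (δ u) * (T * ι R (δ h)) = 0 := by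
    rw [center_mul_comm, ← mul_assoc]
    exact mul_bivectorEsymm_eq_zero δ v y s (by omega)
      (pow_two (LinearMap.range (ι R ∘ₗ δ)) ▸ Submodule.mul_mem_mul (hmem u) (hmem h))
  set Y := ∑ i ∈ s, X (δ (v i)) • y i
  have hcontract : CliffordAlgebra.contractLeft X (S : ExteriorAlgebra R E)
      = ι R (Y - δ (∑ i ∈ s, X (y i) • v i)) * T := by
    rw [contractLeft_bivectorEsymm_succ, Finset.sum_sub_distrib, map_sum δ]
    simp only [map_smul, T, Y]
  calc X (δ h) • (S : ExteriorAlgebra R E)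
      = ι R (δ h) * (ι R (Y - δ (∑ i ∈ s, X (y i) • v i)) * T) := by
        rw [← hcontract, ← sub_eq_zero, ← CliffordAlgebra.contractLeft_ι_mul, hS, map_zero]
    _ = -(ι R (Y - δ (∑ i ∈ s, X (y i) • v i)) * (T * ι R (δ h))) := by
        rw [← mul_assoc, ι_mul_ι_eq_neg, center_mul_comm T, neg_mul, mul_assoc]
    _ = ι R (δ u - Y) * (T * ι R (δ h)) := by
        simp only [map_sub, sub_mul, hT, sub_zero, zero_sub]

end Bivector

section ShapovalovForm

variable {M r}

/-- Pullback of linear forms along the difference map `(z, w) ↦ z - w` from `W × W` to `W`. -/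
def pullbackSub (M : ℕ) : Module.Dual ℂ (Fin M → ℂ) →ₗ[ℂ] Cov M :=
  (LinearMap.fst ℂ (Fin M → ℂ) (Fin M → ℂ) - LinearMap.snd ℂ (Fin M → ℂ) (Fin M → ℂ)).dualMap

/-- The pullback of the linear part of `f_i` along the second projection, scaled by
`a_i / (f_i^{(1)} f_i^{(2)})` at the point `p`. -/
def scaledSnd (ℓ : Fin r → ((Fin M → ℂ) →ₗ[ℂ] ℂ)) (c a : Fin r → ℂ) (p : Pt M) (i : Fin r) :
    Cov M :=
  (a i * (ℓ i p.1 + c i)⁻¹ * (ℓ i p.2 + c i)⁻¹) • (ℓ i).comp (LinearMap.snd ℂ _ _)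

lemma ι_comp_fst (φ : Module.Dual ℂ (Fin M → ℂ)) :
    ι ℂ (φ.comp (LinearMap.fst ℂ (Fin M → ℂ) (Fin M → ℂ)))
      = ι ℂ (pullbackSub M φ) + ι ℂ (φ.comp (LinearMap.snd ℂ (Fin M → ℂ) (Fin M → ℂ))) := by
  rw [← map_add]
  congr 1
  ext <;> simp [pullbackSub]

lemma pullbackSub_apply (φ : Module.Dual ℂ (Fin M → ℂ)) (p : Pt M) :
    pullbackSub M φ p = φ p.1 - φ p.2 := by
  simp [pullbackSub]

lemma smul_dlog1_mul_dlog2 (ℓ : Fin r → ((Fin M → ℂ) →ₗ[ℂ] ℂ)) (c a : Fin r → ℂ) (p : Pt M)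
    (i : Fin r) :
    a i • (dlog1 M r ℓ c i p * dlog2 M r ℓ c i p)
      = bivector ℂ (pullbackSub M (ℓ i)) (scaledSnd ℓ c a p i) := by
  simp only [dlog1, dlog2, scaledSnd, bivector, ι_comp_fst, smul_mul_assoc, mul_smul_comm, add_mul,
    ι_sq_zero, add_zero, map_smul, smul_smul]
  congr 1
  ring

lemma Sb_eq_bivectorEsymm (ℓ : Fin r → ((Fin M → ℂ) →ₗ[ℂ] ℂ)) (c a : Fin r → ℂ) (b : ℕ)
    (p : Pt M) :
    Sb M r ℓ c a b p
      = bivectorEsymm ℂ (fun i => pullbackSub M (ℓ i)) (scaledSnd ℓ c a p) Finset.univ b := by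
  rw [Sb, bivectorEsymm, Finset.esymm_map_val, AddSubmonoidClass.coe_finsetSum]
  refine Finset.sum_congr rfl fun s _ => ?_
  rw [← prod_map_sort, ← prod_map_sort, prod_map_smul_prod_map, SubmonoidClass.coe_list_prod,
    List.map_map]
  simp only [smul_dlog1_mul_dlog2, Function.comp_def]

lemma dlogH_eq (F : Fin M → ((Fin M → ℂ) →ₗ[ℂ] ℂ)) (q : Fin M) (p : Pt M) :
    dlogH M F q p = (F q p.1 - F q p.2)⁻¹ • ι ℂ (pullbackSub M (F q)) := by
  rw [dlogH, map_sub, ι_comp_fst, add_sub_cancel_right]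

lemma eta1_sub_eta2 (ℓ : Fin r → ((Fin M → ℂ) →ₗ[ℂ] ℂ)) (c a : Fin r → ℂ) (p : Pt M)
    (h1 : ∀ i, ℓ i p.1 + c i ≠ 0) (h2 : ∀ i, ℓ i p.2 + c i ≠ 0) :
    eta1 M r ℓ c a p - eta2 M r ℓ c a p
      = ι ℂ (pullbackSub M (∑ i, (a i * (ℓ i p.1 + c i)⁻¹) • ℓ i)
          - ∑ i, (ℓ i p.1 - ℓ i p.2) • scaledSnd ℓ c a p i) := by
  simp only [eta1, eta2, map_sum, ← Finset.sum_sub_distrib, map_sub]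
  refine Finset.sum_congr rfl fun i _ => ?_
  have hA := h1 i
  have hB := h2 i
  simp only [dlog1, dlog2, scaledSnd, ι_comp_fst, map_smul, smul_add, smul_smul]
  match_scalars
  · ring
  · field_simp
    ring

end ShapovalovForm

/-- **Corollary `grundlegendSpeciale`.** For any `q ∈ {1,…,M}`, the
Shapovalov form `S = S^{(M)}` satisfies
`S = (η^{(1)} − η^{(2)}) ∧ S^{(M−1)} ∧ dlog(F_q^{(1)} − F_q^{(2)})` on the open set
where `F_q^{(1)} − F_q^{(2)}` (and all the `f_i^{(1)}, f_i^{(2)}`) are invertible.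
In particular `S` is exact in the Aomoto complex with differential
`ω ↦ (η^{(1)} − η^{(2)}) ∧ ω` there. -/
theorem shapovalov_form_exact
    (ℓ : Fin r → ((Fin M → ℂ) →ₗ[ℂ] ℂ)) (c : Fin r → ℂ) (a : Fin r → ℂ)
    (F : Fin M → ((Fin M → ℂ) →ₗ[ℂ] ℂ)) (q : Fin M)
    (p : Pt M)
    (h1 : ∀ i, ℓ i p.1 + c i ≠ 0) (h2 : ∀ i, ℓ i p.2 + c i ≠ 0)
    (h3 : F q p.1 ≠ F q p.2) :
    Sb M r ℓ c a M p
      = (eta1 M r ℓ c a p - eta2 M r ℓ c a p) *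
          (Sb M r ℓ c a (M - 1) p * dlogH M F q p)
    ∧ ∃ ω : Forms M,
        Sb M r ℓ c a M p = (eta1 M r ℓ c a p - eta2 M r ℓ c a p) * ω := by
  have hH : F q p.1 - F q p.2 ≠ 0 := sub_ne_zero.2 h3
  have hM : M - 1 + 1 = M := Nat.sub_add_cancel q.pos
  have hfinrank : Module.finrank ℂ (Module.Dual ℂ (Fin M → ℂ)) = M := by
    rw [Subspace.dual_finrank_eq, Module.finrank_fin_fun]
  have hidentity := smul_bivectorEsymm_succ (pullbackSub M) (Module.Dual.eval ℂ (Pt M) p) ℓ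
    (scaledSnd ℓ c a p) Finset.univ (n := M - 1) (by omega)
    (∑ i, (a i * (ℓ i p.1 + c i)⁻¹) • ℓ i) (F q)
  simp only [Module.Dual.eval_apply, pullbackSub_apply] at hidentity
  have hprimitive : Sb M r ℓ c a M p
      = (eta1 M r ℓ c a p - eta2 M r ℓ c a p) * (Sb M r ℓ c a (M - 1) p * dlogH M F q p) := by
    rw [Sb_eq_bivectorEsymm, Sb_eq_bivectorEsymm, eta1_sub_eta2 ℓ c a p h1 h2, dlogH_eq,
      mul_smul_comm, mul_smul_comm, eq_inv_smul_iff₀ hH, ← hidentity, hM]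
  exact ⟨hprimitive, _, hprimitive⟩
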